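/- For every strictly increasing sequence of positive integers 𝒥 = (j_m)_{m≥1} and every ξ ≥ 1, the Hausdorff dimension with respect to the gauge distance of the sets S_ξ(𝒥) and S̃_ξ(𝒥) satisfies dim_H S̃_ξ(𝒥) = dim_H S_ξ(𝒥) = 4/ξ. -/

import Mathlib

noncomputable section

open MeasureTheory

/-- The underlying space of the Heisenberg group: `ℝ³`. -/
abbrev H3 : Type := ℝ × ℝ × ℝ

/-- The Heisenberg group law `(p,q,r)∗(p',q',r') = (p+p', q+q', r+r'+2(qp'−pq'))`. -/
def Hmul (x y : H3) : H3 :=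
  (x.1 + y.1, x.2.1 + y.2.1, x.2.2 + y.2.2 + 2 * (x.2.1 * y.1 - x.1 * y.2.1))

/-- The inverse for the Heisenberg group law. -/
def Hinv (x : H3) : H3 := (-x.1, -x.2.1, -x.2.2)

/-- The homogeneous (gauge) norm `‖(p,q,r)‖ = ((p²+q²)²+r²)^(1/4)`. -/
def Hnorm (x : H3) : ℝ := ((x.1 ^ 2 + x.2.1 ^ 2) ^ 2 + x.2.2 ^ 2) ^ ((1 : ℝ) / 4)

/-- The gauge distance `δ(x,y) = ‖x⁻¹∗y‖`. -/
def Hdist (x y : H3) : ℝ := Hnorm (Hmul (Hinv x) y)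

/-- The gauge ball `B(x,r)`. -/
def Hball (x : H3) (r : ℝ) : Set H3 := {y | Hdist x y < r}

/-- The dilation `λ∘(p,q,r) = (λp, λq, λ²r)`. -/
def Hdil (l : ℝ) (x : H3) : H3 := (l * x.1, l * x.2.1, l ^ 2 * x.2.2)

/-- A lattice point of `ℤ³` seen inside `ℝ³`. -/
def latticePt (k : ℤ × ℤ × ℤ) : H3 := ((k.1 : ℝ), (k.2.1 : ℝ), (k.2.2 : ℝ))

/-- The dyadic point `x_{j,k} = 2^{−j}∘k`. -/
def xjk (j : ℤ) (k : ℤ × ℤ × ℤ) : H3 := Hdil ((2 : ℝ) ^ (-j)) (latticePt k)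

open scoped ENNReal

/-- The diameter of a set for the gauge distance. -/
def gaugeDiam (E : Set H3) : ℝ := sSup {d : ℝ | ∃ x ∈ E, ∃ y ∈ E, d = Hdist x y}

/-- The Hausdorff premeasure `H^d_η` for the gauge distance: infimum of `Σ |Bᵢ|^d` over all
countable coverings by gauge balls of radius less than `η`. -/
def gaugeHausdorffPre (d η : ℝ) (E : Set H3) : ℝ≥0∞ :=
  ⨅ (c : ℕ → H3) (r : ℕ → ℝ)
    (_ : (∀ n, 0 < r n ∧ r n < η) ∧ E ⊆ ⋃ n, Hball (c n) (r n)),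
      ∑' n, ENNReal.ofReal (gaugeDiam (Hball (c n) (r n)) ^ d)

/-- The Hausdorff measure `H^d = lim_{η→0⁺} H^d_η` for the gauge distance (the limit of the
monotone family being its supremum). -/
def gaugeHausdorff (d : ℝ) (E : Set H3) : ℝ≥0∞ :=
  ⨆ (η : ℝ) (_ : 0 < η), gaugeHausdorffPre d η E

/-- The Hausdorff dimension for the gauge distance: `dim_H E = inf{d > 0 : H^d(E) = 0}`. -/
def gaugeDimH (E : Set H3) : ℝ := sInf {d : ℝ | 0 < d ∧ gaugeHausdorff d E = 0}

/-- The unit cube `[0,1)³`. -/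
def C0 : Set H3 :=
  {x : H3 | (0 ≤ x.1 ∧ x.1 < 1) ∧ (0 ≤ x.2.1 ∧ x.2.1 < 1) ∧ (0 ≤ x.2.2 ∧ x.2.2 < 1)}

/-- `x` is `ξ`-approximable with respect to the sequence `𝒥 = (j_m)`: the inequality
`δ(x, x_{j_m,k}) ≤ C·2^{−j_m ξ}` holds for infinitely many pairs `(m,k)`. -/
def Approximable (C : ℝ) (J : ℕ → ℕ) (ξ : ℝ) (x : H3) : Prop :=
  {mk : ℕ × (ℤ × ℤ × ℤ) |
    Hdist x (xjk (J mk.1 : ℤ) mk.2) ≤ C * (2 : ℝ) ^ (-(J mk.1 : ℝ) * ξ)}.Infinite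

/-- `S_ξ(𝒥)`: the set of `ξ`-approximable points of `[0,1)³`. -/
def SXi (C : ℝ) (J : ℕ → ℕ) (ξ : ℝ) : Set H3 := {x ∈ C0 | Approximable C J ξ x}

/-- The approximation rate `ξ_x(𝒥) = sup{ξ > 0 : x is ξ-approximable w.r.t. 𝒥}`. -/
def approxRate (C : ℝ) (J : ℕ → ℕ) (x : H3) : ℝ :=
  sSup {ξ : ℝ | 0 < ξ ∧ Approximable C J ξ x}

/-- `S̃_ξ(𝒥)`: the set of points of `[0,1)³` with approximation rate exactly `ξ`. -/
def SXiTilde (C : ℝ) (J : ℕ → ℕ) (ξ : ℝ) : Set H3 := {x ∈ C0 | approxRate C J x = ξ}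

/-!
For the upper bound, the gauge ball of radius `2 + C` contains `O(16 ^ j)` dyadic points of
level `j`, and the balls of radius `C * 2 ^ (-j * ξ)` around these cover the limsup set
`S_ξ(𝒥)`; the sum `∑ 16 ^ j * 2 ^ (-j * ξ * d)` converges as soon as `d > 4 / ξ`.

For the lower bound, every digit sequence `a n ∈ {0,1} × {0,1} × {0,1,2,3}` defines a point
`∏ x_{n + 1, a n}` of the Heisenberg group. Along a sparse subsequence `j i` of `𝒥`, the digits
in the blocks `[j i, ξ * j i)` are set to zero, which puts the point at distance
`O(2 ^ (-ξ * j i))` from a dyadic point of level `j i`; the other digits are independent and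
uniform. A gauge ball of radius `2 ^ (-n)` then has mass `O(16 ^ (-N))`, where `N` is the number
of free digits before `n`, and `N ≥ n / ξ - o(n)`; so sets with `H^d = 0` are null for this
random point whenever `d < 4 / ξ`. In particular `S_ξ'(𝒥)` is null for every `ξ' > ξ`, so that
the random point almost surely has approximation rate exactly `ξ`.
-/

/-! ### The gauge metric -/

/-- The horizontal projection `(p, q, r) ↦ p + iq`. -/
def horizontal (x : H3) : ℂ := ⟨x.1, x.2.1⟩

/-- The Korányi function `|p + iq|² + ir`, whose modulus is the square of the homogeneous norm. -/
def koranyi (x : H3) : ℂ := ⟨x.1 ^ 2 + x.2.1 ^ 2, x.2.2⟩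

lemma Hnorm_nonneg (x : H3) : 0 ≤ Hnorm x := by
  unfold Hnorm; positivity

lemma Hnorm_pow_four (x : H3) : Hnorm x ^ 4 = (x.1 ^ 2 + x.2.1 ^ 2) ^ 2 + x.2.2 ^ 2 := by
  unfold Hnorm
  rw [← Real.rpow_natCast, ← Real.rpow_mul (by positivity)]
  norm_num

lemma Hnorm_le_of_pow_four_le {x : H3} {R : ℝ} (hR : 0 ≤ R)
    (h : (x.1 ^ 2 + x.2.1 ^ 2) ^ 2 + x.2.2 ^ 2 ≤ R ^ 4) : Hnorm x ≤ R :=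
  le_of_pow_le_pow_left₀ four_ne_zero hR ((Hnorm_pow_four x).trans_le h)

lemma norm_koranyi (x : H3) : ‖koranyi x‖ = Hnorm x ^ 2 := by
  refine (pow_left_inj₀ (norm_nonneg _) (by positivity) two_ne_zero).1 ?_
  rw [← pow_mul, Hnorm_pow_four, Complex.sq_norm, Complex.normSq_apply]
  simp only [koranyi]
  ring

lemma norm_horizontal_le (x : H3) : ‖horizontal x‖ ≤ Hnorm x := by
  refine le_of_pow_le_pow_left₀ four_ne_zero (Hnorm_nonneg x) ?_
  have h : ‖horizontal x‖ ^ 4 = (x.1 ^ 2 + x.2.1 ^ 2) ^ 2 := by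
    rw [show 4 = 2 * 2 by norm_num, pow_mul, Complex.sq_norm, Complex.normSq_apply]
    simp only [horizontal]
    ring
  rw [h, Hnorm_pow_four]
  exact le_add_of_nonneg_right (sq_nonneg _)

lemma koranyi_Hmul (x y : H3) :
    koranyi (Hmul x y) =
      koranyi x + koranyi y + 2 * (horizontal x * starRingEnd ℂ (horizontal y)) := by
  apply Complex.ext <;> simp [koranyi, horizontal, Hmul] <;> ring

lemma Hnorm_Hmul_le (x y : H3) : Hnorm (Hmul x y) ≤ Hnorm x + Hnorm y := by
  refine le_of_pow_le_pow_left₀ two_ne_zero (add_nonneg (Hnorm_nonneg x) (Hnorm_nonneg y)) ?_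
  calc Hnorm (Hmul x y) ^ 2
      = ‖koranyi x + koranyi y + 2 * (horizontal x * starRingEnd ℂ (horizontal y))‖ := by
        rw [← norm_koranyi, koranyi_Hmul]
    _ ≤ ‖koranyi x‖ + ‖koranyi y‖ + ‖2 * (horizontal x * starRingEnd ℂ (horizontal y))‖ :=
        norm_add₃_le
    _ = Hnorm x ^ 2 + Hnorm y ^ 2 + 2 * (‖horizontal x‖ * ‖horizontal y‖) := by
        simp [norm_koranyi]
    _ ≤ Hnorm x ^ 2 + Hnorm y ^ 2 + 2 * (Hnorm x * Hnorm y) := by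
        gcongr <;> first | exact norm_horizontal_le _ | exact Hnorm_nonneg _
    _ = (Hnorm x + Hnorm y) ^ 2 := by ring

lemma Hdist_nonneg (x y : H3) : 0 ≤ Hdist x y := Hnorm_nonneg _

lemma Hdist_comm (x y : H3) : Hdist x y = Hdist y x := by
  simp only [Hdist, Hnorm, Hmul, Hinv]
  ring_nf

lemma Hdist_triangle (x y z : H3) : Hdist x z ≤ Hdist x y + Hdist y z := by
  have h : Hmul (Hinv x) z = Hmul (Hmul (Hinv x) y) (Hmul (Hinv y) z) := by
    ext <;> simp only [Hmul, Hinv] <;> ring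
  simpa only [Hdist, h] using Hnorm_Hmul_le _ _

lemma Hdist_Hmul_self (x y : H3) : Hdist x (Hmul x y) = Hnorm y := by
  have h : Hmul (Hinv x) (Hmul x y) = y := by
    ext <;> simp only [Hmul, Hinv] <;> ring
  rw [Hdist, h]

lemma Hdist_zero_left (x : H3) : Hdist 0 x = Hnorm x := by
  simp [Hdist, Hmul, Hinv]

lemma Hdist_self (x : H3) : Hdist x x = 0 := by
  have h : Hmul (Hinv x) x = 0 := by
    ext <;> simp only [Hmul, Hinv, Prod.fst_zero, Prod.snd_zero] <;> ring
  simp [Hdist, h, Hnorm]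

lemma Hnorm_Hdil {l : ℝ} (hl : 0 ≤ l) (x : H3) : Hnorm (Hdil l x) = l * Hnorm x := by
  refine (pow_left_inj₀ (Hnorm_nonneg _) (mul_nonneg hl (Hnorm_nonneg x)) four_ne_zero).1 ?_
  rw [mul_pow, Hnorm_pow_four, Hnorm_pow_four]
  simp only [Hdil]
  ring

lemma Hdist_Hdil {l : ℝ} (hl : 0 ≤ l) (x y : H3) :
    Hdist (Hdil l x) (Hdil l y) = l * Hdist x y := by
  have h : Hmul (Hinv (Hdil l x)) (Hdil l y) = Hdil l (Hmul (Hinv x) y) := by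
    ext <;> simp only [Hmul, Hinv, Hdil] <;> ring
  rw [Hdist, h, Hnorm_Hdil hl, Hdist]

lemma abs_sub_fst_le_Hdist (x y : H3) : |y.1 - x.1| ≤ Hdist x y := by
  have h := (Complex.abs_re_le_norm _).trans (norm_horizontal_le (Hmul (Hinv x) y))
  refine (congrArg abs ?_).trans_le h
  simp only [horizontal, Hmul, Hinv]
  ring

lemma abs_sub_snd_le_Hdist (x y : H3) : |y.2.1 - x.2.1| ≤ Hdist x y := by
  have h := (Complex.abs_im_le_norm _).trans (norm_horizontal_le (Hmul (Hinv x) y))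
  refine (congrArg abs ?_).trans_le h
  simp only [horizontal, Hmul, Hinv]
  ring

lemma abs_sub_thd_le_Hdist_sq (x y : H3) :
    |y.2.2 - (x.2.2 + 2 * (x.2.1 * y.1 - x.1 * y.2.1))| ≤ Hdist x y ^ 2 := by
  have h := (Complex.abs_im_le_norm _).trans_eq (norm_koranyi (Hmul (Hinv x) y))
  refine (congrArg abs ?_).trans_le h
  simp only [koranyi, Hmul, Hinv]
  ring

lemma dist_le_mul_Hdist (x y : H3) :
    dist x y ≤ (1 + 4 * Hnorm x + Hdist x y) * Hdist x y := by
  have hx := Hdist_zero_left x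
  have hp := abs_sub_fst_le_Hdist x y
  have hq := abs_sub_snd_le_Hdist x y
  have hr := abs_sub_thd_le_Hdist_sq x y
  have hδ := Hdist_nonneg x y
  have hN := Hnorm_nonneg x
  have hxp : |x.1| ≤ Hnorm x := by simpa [hx] using abs_sub_fst_le_Hdist 0 x
  have hxq : |x.2.1| ≤ Hnorm x := by simpa [hx] using abs_sub_snd_le_Hdist 0 x
  have hqp : |x.2.1 * (y.1 - x.1)| ≤ Hnorm x * Hdist x y := by rw [abs_mul]; gcongr
  have hpq : |x.1 * (y.2.1 - x.2.1)| ≤ Hnorm x * Hdist x y := by rw [abs_mul]; gcongr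
  have hle : Hdist x y ≤ (1 + 4 * Hnorm x + Hdist x y) * Hdist x y :=
    le_mul_of_one_le_left hδ (by linarith)
  rw [dist_comm, Prod.dist_eq, Prod.dist_eq, Real.dist_eq, Real.dist_eq, Real.dist_eq]
  refine max_le (hp.trans hle) (max_le (hq.trans hle) ?_)
  rw [abs_le] at *
  constructor <;> nlinarith

lemma continuous_Hdist_right (x : H3) : Continuous (Hdist x) := by
  unfold Hdist Hnorm Hmul
  exact Continuous.rpow_const (by fun_prop) fun _ => Or.inr (by norm_num)

lemma Hdist_le_of_geometric {u : ℕ → H3} {K : ℝ} (hK : 0 ≤ K)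
    (hu : ∀ n, Hdist (u n) (u (n + 1)) ≤ K * (1 / 2) ^ n) (n m : ℕ) :
    Hdist (u n) (u (n + m)) ≤ 2 * K * (1 / 2) ^ n := by
  have h : Hdist (u n) (u (n + m)) ≤ 2 * K * (1 / 2) ^ n - 2 * K * (1 / 2) ^ (n + m) := by
    induction m with
    | zero => simp [Hdist_self]
    | succ m ih =>
      calc Hdist (u n) (u (n + (m + 1)))
          ≤ Hdist (u n) (u (n + m)) + Hdist (u (n + m)) (u (n + m + 1)) := Hdist_triangle _ _ _
        _ ≤ (2 * K * (1 / 2) ^ n - 2 * K * (1 / 2) ^ (n + m)) + K * (1 / 2) ^ (n + m) :=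
            add_le_add ih (hu _)
        _ = 2 * K * (1 / 2) ^ n - 2 * K * (1 / 2) ^ (n + (m + 1)) := by ring
  exact h.trans (sub_le_self _ (by positivity))

lemma exists_Hdist_le_of_geometric {u : ℕ → H3} {K : ℝ}
    (hu : ∀ n, Hdist (u n) (u (n + 1)) ≤ K * (1 / 2) ^ n) :
    ∃ x, ∀ n, Hdist (u n) x ≤ 2 * K * (1 / 2) ^ n := by
  have hK : 0 ≤ K := by simpa using (Hdist_nonneg _ _).trans (hu 0)
  have hbound (n : ℕ) : Hnorm (u n) ≤ Hnorm (u 0) + 2 * K := by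
    have h := Hdist_triangle 0 (u 0) (u n)
    have h' := Hdist_le_of_geometric hK hu 0 n
    rw [Hdist_zero_left, Hdist_zero_left] at h
    simp only [zero_add, pow_zero, mul_one] at h'
    linarith
  have hstep (n : ℕ) : Hdist (u n) (u (n + 1)) ≤ K :=
    (hu n).trans (mul_le_of_le_one_right hK (pow_le_one₀ (by norm_num) (by norm_num)))
  have hcauchy : CauchySeq u := by
    refine cauchySeq_of_le_geometric (1 / 2) ((1 + 4 * (Hnorm (u 0) + 2 * K) + K) * K)
      (by norm_num) fun n => ?_
    have hpos := Hnorm_nonneg (u 0)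
    calc dist (u n) (u (n + 1))
        ≤ (1 + 4 * Hnorm (u n) + Hdist (u n) (u (n + 1))) * Hdist (u n) (u (n + 1)) :=
          dist_le_mul_Hdist _ _
      _ ≤ (1 + 4 * (Hnorm (u 0) + 2 * K) + K) * (K * (1 / 2) ^ n) :=
          mul_le_mul (by linarith [hbound n, hstep n]) (hu n) (Hdist_nonneg _ _) (by linarith)
      _ = (1 + 4 * (Hnorm (u 0) + 2 * K) + K) * K * (1 / 2) ^ n := by ring
  obtain ⟨x, hx⟩ := cauchySeq_tendsto_of_complete hcauchy
  refine ⟨x, fun n => le_of_tendsto ((continuous_Hdist_right (u n)).tendsto x |>.comp hx) ?_⟩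
  filter_upwards [Filter.eventually_ge_atTop n] with k hk
  obtain ⟨m, rfl⟩ := Nat.exists_eq_add_of_le hk
  exact Hdist_le_of_geometric hK hu n m

/-! ### Hausdorff measures of the gauge distance -/

lemma mem_Hball {x y : H3} {r : ℝ} : y ∈ Hball x r ↔ Hdist x y < r := Iff.rfl

lemma Hdist_le_two_mul {c x y : H3} {r : ℝ} (hx : x ∈ Hball c r) (hy : y ∈ Hball c r) :
    Hdist x y ≤ 2 * r := by
  have h := Hdist_triangle x c y
  rw [Hdist_comm x c] at h
  rw [mem_Hball] at hx hy
  linarith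

lemma gaugeDiam_Hball_le {c : H3} {r : ℝ} (hr : 0 ≤ r) : gaugeDiam (Hball c r) ≤ 2 * r := by
  refine Real.sSup_le ?_ (by positivity)
  rintro _ ⟨x, hx, y, hy, rfl⟩
  exact Hdist_le_two_mul hx hy

lemma le_gaugeDiam_Hball {c : H3} {r : ℝ} (hr : 0 < r) : r ≤ gaugeDiam (Hball c r) := by
  have hbdd : BddAbove {d : ℝ | ∃ x ∈ Hball c r, ∃ y ∈ Hball c r, d = Hdist x y} := by
    refine ⟨2 * r, ?_⟩
    rintro _ ⟨x, hx, y, hy, rfl⟩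
    exact Hdist_le_two_mul hx hy
  refine le_of_forall_lt_imp_le_of_dense fun t ht => ?_
  rcases lt_or_ge t 0 with ht0 | ht0
  · exact ht0.le.trans (Real.sSup_nonneg fun _ ⟨_, _, _, _, h⟩ => h ▸ Hdist_nonneg _ _)
  have hnorm : Hnorm (t, 0, 0) = t := by
    refine (pow_left_inj₀ (Hnorm_nonneg _) ht0 four_ne_zero).1 ?_
    rw [Hnorm_pow_four]
    ring
  refine le_csSup hbdd ⟨c, ?_, Hmul c (t, 0, 0), ?_, ?_⟩
  · simpa only [mem_Hball, Hdist_self] using hr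
  · simpa only [mem_Hball, Hdist_Hmul_self, hnorm] using ht
  · rw [Hdist_Hmul_self, hnorm]

lemma gaugeHausdorff_mono (d : ℝ) {E F : Set H3} (h : E ⊆ F) :
    gaugeHausdorff d E ≤ gaugeHausdorff d F :=
  iSup₂_mono fun _ _ => iInf₂_mono fun _ _ =>
    le_iInf fun hc => iInf_le _ ⟨hc.1, h.trans hc.2⟩

lemma gaugeHausdorff_eq_zero_of_subset {d : ℝ} {E F : Set H3} (h : E ⊆ F)
    (hF : gaugeHausdorff d F = 0) : gaugeHausdorff d E = 0 :=
  le_antisymm ((gaugeHausdorff_mono d h).trans_eq hF) zero_le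

lemma gaugeHausdorffPre_eq_zero {d η : ℝ} {E : Set H3} (hη : 0 < η)
    (hE : gaugeHausdorff d E = 0) : gaugeHausdorffPre d η E = 0 :=
  le_antisymm (hE ▸ le_iSup₂_of_le (f := fun η (_ : 0 < η) => gaugeHausdorffPre d η E) η hη le_rfl)
    zero_le

lemma measure_preimage_eq_zero_of_gaugeHausdorff_eq_zero {Ω : Type*} [MeasurableSpace Ω]
    {P : Measure Ω} {Φ : Ω → H3} {d K : ℝ} (hd : 0 ≤ d)
    (hball : ∀ c r, 0 < r → P (Φ ⁻¹' Hball c r) ≤ ENNReal.ofReal (K * r ^ d))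
    {E : Set H3} (hE : gaugeHausdorff d E = 0) : P (Φ ⁻¹' E) = 0 := by
  have hle : P (Φ ⁻¹' E) / ENNReal.ofReal K ≤ gaugeHausdorffPre d 1 E := by
    refine le_iInf₂ fun c r => le_iInf fun hc => ENNReal.div_le_of_le_mul ?_
    calc P (Φ ⁻¹' E) ≤ P (⋃ n, Φ ⁻¹' Hball (c n) (r n)) :=
          measure_mono ((Set.preimage_mono hc.2).trans_eq Set.preimage_iUnion)
      _ ≤ ∑' n, P (Φ ⁻¹' Hball (c n) (r n)) := measure_iUnion_le _
      _ ≤ ∑' n, ENNReal.ofReal (gaugeDiam (Hball (c n) (r n)) ^ d) * ENNReal.ofReal K := by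
          refine ENNReal.tsum_le_tsum fun n => ?_
          have hr : 0 < r n := (hc.1 n).1
          refine (hball _ _ hr).trans ?_
          rw [mul_comm, ENNReal.ofReal_mul (by positivity)]
          gcongr
          exact le_gaugeDiam_Hball hr
      _ = (∑' n, ENNReal.ofReal (gaugeDiam (Hball (c n) (r n)) ^ d)) * ENNReal.ofReal K :=
          ENNReal.tsum_mul_right
  rw [gaugeHausdorffPre_eq_zero one_pos hE, nonpos_iff_eq_zero, ENNReal.div_eq_zero_iff] at hle
  exact hle.resolve_right ENNReal.ofReal_ne_top

lemma gaugeHausdorffPre_le_tsum {d η : ℝ} (hd : 0 ≤ d) {E : Set H3} {c : ℕ → H3} {r : ℕ → ℝ}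
    (hr : ∀ n, 0 < r n ∧ r n < η) (hE : E ⊆ ⋃ n, Hball (c n) (r n)) :
    gaugeHausdorffPre d η E ≤ ENNReal.ofReal (2 ^ d) * ∑' n, ENNReal.ofReal (r n ^ d) := by
  refine (iInf₂_le_of_le c r (iInf_le _ ⟨hr, hE⟩)).trans ?_
  rw [← ENNReal.tsum_mul_left]
  refine ENNReal.tsum_le_tsum fun n => ?_
  have hn : 0 < r n := (hr n).1
  rw [← ENNReal.ofReal_mul (by positivity), ← Real.mul_rpow (by norm_num) hn.le]
  gcongr
  · exact hn.le.trans (le_gaugeDiam_Hball hn)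
  · exact gaugeDiam_Hball_le hn.le

/-- The tails of the sequence of balls are admissible covers of the limsup set. -/
lemma gaugeHausdorff_eq_zero_of_summable_nat {d : ℝ} (hd : 0 < d) {E : Set H3} {c : ℕ → H3}
    {r : ℕ → ℝ} (hr : ∀ n, 0 < r n) (hsum : Summable fun n => r n ^ d)
    (hE : ∀ x ∈ E, {n | x ∈ Hball (c n) (r n)}.Infinite) : gaugeHausdorff d E = 0 := by
  have hr0 : Filter.Tendsto r Filter.atTop (nhds 0) := by
    have h := hsum.tendsto_atTop_zero.rpow_const (p := d⁻¹) (Or.inr (by positivity))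
    rw [Real.zero_rpow (by positivity)] at h
    exact h.congr fun n => Real.rpow_rpow_inv (hr n).le hd.ne'
  have htail : Filter.Tendsto
      (fun M => ENNReal.ofReal (2 ^ d) * ∑' n, ENNReal.ofReal (r (n + M) ^ d))
      Filter.atTop (nhds 0) := by
    have h := ENNReal.tendsto_sum_nat_add (fun n => ENNReal.ofReal (r n ^ d))
      hsum.tsum_ofReal_ne_top
    simpa using ENNReal.Tendsto.const_mul h (Or.inr (ENNReal.ofReal_ne_top (r := 2 ^ d)))
  have hpre (η : ℝ) (hη : 0 < η) : gaugeHausdorffPre d η E ≤ 0 := by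
    refine ge_of_tendsto htail ?_
    obtain ⟨N, hN⟩ := Filter.eventually_atTop.1 (hr0.eventually_lt_const hη)
    filter_upwards [Filter.eventually_ge_atTop N] with M hM
    refine gaugeHausdorffPre_le_tsum (c := fun n => c (n + M)) hd.le
      (fun n => ⟨hr _, hN _ (by omega)⟩) fun x hx => Set.mem_iUnion.2 ?_
    obtain ⟨n, hn, hMn⟩ := (hE x hx).exists_gt M
    exact ⟨n - M, by rwa [Nat.sub_add_cancel hMn.le]⟩
  simpa only [gaugeHausdorff, ENNReal.iSup_eq_zero, nonpos_iff_eq_zero] using hpre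

lemma gaugeHausdorff_eq_zero_of_summable {ι : Type*} [Countable ι] [Infinite ι] {d : ℝ}
    (hd : 0 < d) {E : Set H3} {c : ι → H3} {r : ι → ℝ} (hr : ∀ i, 0 < r i)
    (hsum : Summable fun i => r i ^ d) (hE : ∀ x ∈ E, {i | x ∈ Hball (c i) (r i)}.Infinite) :
    gaugeHausdorff d E = 0 := by
  obtain ⟨e⟩ : Nonempty (ℕ ≃ ι) := nonempty_equiv_of_countable
  refine gaugeHausdorff_eq_zero_of_summable_nat hd (c := c ∘ e) (fun n => hr (e n))
    (e.summable_iff.2 hsum) fun x hx => ?_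
  exact (hE x hx).preimage fun i _ => e.surjective i

lemma gaugeDimH_eq {E : Set H3} {a : ℝ} (ha : 0 ≤ a)
    (h_null : ∀ d, a < d → gaugeHausdorff d E = 0)
    (h_pos : ∀ d, 0 < d → d < a → gaugeHausdorff d E ≠ 0) : gaugeDimH E = a := by
  refine csInf_eq_of_forall_ge_of_forall_gt_exists_lt ⟨a + 1, by linarith, h_null _ (by linarith)⟩
    (fun d ⟨hd, hE⟩ => not_lt.1 fun hlt => h_pos d hd hlt hE) fun t ht => ?_
  obtain ⟨s, has, hst⟩ := exists_between ht
  exact ⟨s, ⟨ha.trans_lt has, h_null s has⟩, hst⟩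

/-! ### Dyadic points in gauge balls -/

lemma Hnorm_le_two_mul {x : H3} {R : ℝ} (hR : 0 ≤ R) (hp : |x.1| ≤ R) (hq : |x.2.1| ≤ R)
    (hr : |x.2.2| ≤ 3 * R ^ 2) : Hnorm x ≤ 2 * R := by
  refine Hnorm_le_of_pow_four_le (by positivity) ?_
  have hp' : x.1 ^ 2 ≤ R ^ 2 := sq_le_sq' (abs_le.1 hp).1 (abs_le.1 hp).2
  have hq' : x.2.1 ^ 2 ≤ R ^ 2 := sq_le_sq' (abs_le.1 hq).1 (abs_le.1 hq).2
  have hr' : x.2.2 ^ 2 ≤ (3 * R ^ 2) ^ 2 := sq_le_sq' (abs_le.1 hr).1 (abs_le.1 hr).2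
  have hpq : (x.1 ^ 2 + x.2.1 ^ 2) ^ 2 ≤ (2 * R ^ 2) ^ 2 :=
    pow_le_pow_left₀ (by positivity) (by linarith) 2
  nlinarith

/-- The integers at distance at most `ρ` from `a`. -/
def intsNear (a ρ : ℝ) : Finset ℤ := Finset.Icc ⌈a - ρ⌉ ⌊a + ρ⌋

lemma mem_intsNear {a ρ : ℝ} {k : ℤ} : k ∈ intsNear a ρ ↔ |k - a| ≤ ρ := by
  rw [intsNear, Finset.mem_Icc, Int.ceil_le, Int.le_floor, abs_le]
  constructor <;> rintro ⟨h₁, h₂⟩ <;> constructor <;> linarith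

lemma card_intsNear_le (a : ℝ) {ρ : ℝ} (hρ : 1 ≤ ρ) : ((intsNear a ρ).card : ℝ) ≤ 3 * ρ := by
  have hle : ⌈a - ρ⌉ ≤ ⌊a + ρ⌋ + 1 := by
    have h : (⌈a - ρ⌉ : ℝ) < ⌊a + ρ⌋ + 1 + 1 := by
      linarith [Int.ceil_lt_add_one (a - ρ), Int.lt_floor_add_one (a + ρ)]
    exact_mod_cast Int.lt_add_one_iff.1 (by exact_mod_cast h)
  have hcard : ((intsNear a ρ).card : ℝ) = ⌊a + ρ⌋ + 1 - ⌈a - ρ⌉ := by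
    rw [intsNear]
    exact_mod_cast Int.card_Icc_of_le _ _ hle
  linarith [Int.floor_le (a + ρ), Int.le_ceil (a - ρ)]

/-- A finite set of `k ∈ ℤ³` containing all lattice points of the closed gauge ball of centre `c`
and radius `R`; its third coordinates follow the tilt of the ball. -/
def latticeNear (c : H3) (R : ℝ) : Finset (ℤ × ℤ × ℤ) :=
  (intsNear c.1 R ×ˢ intsNear c.2.1 R).biUnion fun k =>
    (intsNear (c.2.2 + 2 * (c.2.1 * k.1 - c.1 * k.2)) (R ^ 2)).map
      ⟨fun l => (k.1, k.2, l), fun _ _ h => (Prod.ext_iff.1 (Prod.ext_iff.1 h).2).2⟩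

lemma mem_latticeNear {c : H3} {R : ℝ} {k : ℤ × ℤ × ℤ} (hk : Hdist c (latticePt k) ≤ R) :
    k ∈ latticeNear c R := by
  have h₃ := (abs_sub_thd_le_Hdist_sq c (latticePt k)).trans
    (pow_le_pow_left₀ (Hdist_nonneg _ _) hk 2)
  simp only [latticeNear, Finset.mem_biUnion, Finset.mem_product, Finset.mem_map, mem_intsNear]
  exact ⟨(k.1, k.2.1), ⟨(abs_sub_fst_le_Hdist c _).trans hk, (abs_sub_snd_le_Hdist c _).trans hk⟩,
    k.2.2, h₃, rfl⟩

lemma card_latticeNear_le (c : H3) {R : ℝ} (hR : 1 ≤ R) :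
    ((latticeNear c R).card : ℝ) ≤ 27 * R ^ 4 := by
  have hR2 : 1 ≤ R ^ 2 := one_le_pow₀ hR
  calc ((latticeNear c R).card : ℝ)
      ≤ ∑ k ∈ intsNear c.1 R ×ˢ intsNear c.2.1 R,
          ((intsNear (c.2.2 + 2 * (c.2.1 * k.1 - c.1 * k.2)) (R ^ 2)).card : ℝ) := by
        rw [latticeNear]
        exact_mod_cast Finset.card_biUnion_le.trans_eq (by simp only [Finset.card_map])
    _ ≤ (intsNear c.1 R ×ˢ intsNear c.2.1 R).card • (3 * R ^ 2) :=
        Finset.sum_le_card_nsmul _ _ _ fun _ _ => card_intsNear_le _ hR2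
    _ = (intsNear c.1 R).card * (intsNear c.2.1 R).card * (3 * R ^ 2) := by
        rw [Finset.card_product, nsmul_eq_mul, Nat.cast_mul]
    _ ≤ 3 * R * (3 * R) * (3 * R ^ 2) := by
        gcongr <;> exact card_intsNear_le _ hR
    _ = 27 * R ^ 4 := by ring

lemma Hdil_Hdil (l m : ℝ) (x : H3) : Hdil l (Hdil m x) = Hdil (l * m) x := by
  ext <;> simp only [Hdil] <;> ring

lemma Hdil_one (x : H3) : Hdil 1 x = x := by
  simp [Hdil]

lemma Hdil_two_pow_xjk (j : ℕ) (k : ℤ × ℤ × ℤ) : Hdil (2 ^ j) (xjk j k) = latticePt k := by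
  rw [xjk, Hdil_Hdil, zpow_neg, zpow_natCast, mul_inv_cancel₀ (by positivity), Hdil_one]

lemma mem_latticeNear_of_xjk {j : ℕ} {c : H3} {R : ℝ} {k : ℤ × ℤ × ℤ}
    (hk : Hdist c (xjk j k) ≤ R * (1 / 2) ^ j) : k ∈ latticeNear (Hdil (2 ^ j) c) R := by
  refine mem_latticeNear ?_
  rw [← Hdil_two_pow_xjk j k, Hdist_Hdil (by positivity)]
  calc (2 : ℝ) ^ j * Hdist c (xjk j k) ≤ 2 ^ j * (R * (1 / 2) ^ j) := by gcongr
    _ = R * (2 * (1 / 2)) ^ j := by rw [mul_pow]; ring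
    _ = R := by norm_num

/-! ### Approximable points -/

lemma SXi_subset_SXi_id {C ξ : ℝ} {J : ℕ → ℕ} (hJ : Function.Injective J) :
    SXi C J ξ ⊆ SXi C id ξ := by
  refine fun x hx => ⟨hx.1, ?_⟩
  refine (hx.2.image (f := fun mk => (J mk.1, mk.2)) ?_).mono ?_
  · rintro ⟨m, k⟩ - ⟨m', k'⟩ - h
    simpa only [Prod.mk.injEq, hJ.eq_iff] using h
  · rintro _ ⟨mk, hmk, rfl⟩
    exact hmk

lemma Approximable.anti {C : ℝ} (hC : 0 ≤ C) {J : ℕ → ℕ} {ξ ξ' : ℝ} (h : ξ' ≤ ξ) {x : H3}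
    (hx : Approximable C J ξ x) : Approximable C J ξ' x := by
  refine Set.Infinite.mono (fun mk hmk => ?_) hx
  refine le_trans (b := C * 2 ^ (-(J mk.1 : ℝ) * ξ)) hmk ?_
  simp only [neg_mul]
  gcongr
  exact one_le_two

lemma SXiTilde_subset_SXi {C : ℝ} (hC : 0 ≤ C) {J : ℕ → ℕ} {ξ ξ' : ℝ} (hξ' : 0 ≤ ξ')
    (h : ξ' < ξ) : SXiTilde C J ξ ⊆ SXi C J ξ' := by
  rintro x ⟨hx, hrate⟩
  have hne : {t : ℝ | 0 < t ∧ Approximable C J t x}.Nonempty := by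
    by_contra hempty
    rw [approxRate, Set.not_nonempty_iff_eq_empty.1 hempty, Real.sSup_empty] at hrate
    linarith
  obtain ⟨t, ht, hlt⟩ := exists_lt_of_lt_csSup hne (hrate.symm ▸ h)
  exact ⟨hx, ht.2.anti hC hlt.le⟩

lemma approxRate_eq {C : ℝ} {J : ℕ → ℕ} {ξ : ℝ} (hξ : 0 < ξ) {x : H3}
    (h_lt : ∀ t < ξ, Approximable C J t x) (h_gt : ∀ t, ξ < t → ¬ Approximable C J t x) :
    approxRate C J x = ξ := by
  have hmem (t : ℝ) (ht : t < ξ) : ∃ s ∈ {s | 0 < s ∧ Approximable C J s x}, t < s := by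
    obtain ⟨s, hs, hsξ⟩ := exists_between (max_lt ht hξ)
    exact ⟨s, ⟨(le_max_right _ _).trans_lt hs, h_lt s hsξ⟩, (le_max_left _ _).trans_lt hs⟩
  refine csSup_eq_of_forall_le_of_forall_lt_exists_gt ?_ ?_ hmem
  · exact (hmem 0 hξ).imp fun _ h => h.1
  · exact fun t ht => not_lt.1 fun hlt => h_gt t hlt ht.2

lemma Hnorm_le_two_of_mem_C0 {x : H3} (hx : x ∈ C0) : Hnorm x ≤ 2 := by
  obtain ⟨⟨hp, hp'⟩, ⟨hq, hq'⟩, hr, hr'⟩ := hx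
  refine (Hnorm_le_two_mul (R := 1) zero_le_one ?_ ?_ ?_).trans_eq (mul_one 2) <;>
    rw [abs_of_nonneg] <;> linarith

lemma Hdil_zero (l : ℝ) : Hdil l 0 = 0 := by
  simp [Hdil]

lemma xjk_zero (j : ℤ) : xjk j 0 = 0 := by
  simp [xjk, latticePt, Hdil]

/-- The indices `(j, k)` of the dyadic points at distance at most `R` from the origin, with
finitely many superfluous ones at each level `j`. -/
abbrev DyadicIndex (R : ℝ) : Type :=
  Σ j : ℕ, latticeNear 0 (R * 2 ^ j)

lemma mem_dyadicIndex {R : ℝ} {j : ℕ} {k : ℤ × ℤ × ℤ} (h : Hdist 0 (xjk j k) ≤ R) :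
    k ∈ latticeNear 0 (R * 2 ^ j) := by
  rw [← Hdil_zero (2 ^ j)]
  refine mem_latticeNear_of_xjk (h.trans_eq ?_)
  rw [mul_assoc, ← mul_pow]
  norm_num

lemma infinite_dyadicIndex {R : ℝ} (hR : 0 ≤ R) : Infinite (DyadicIndex R) := by
  have hzero (j : ℕ) : (0 : ℤ × ℤ × ℤ) ∈ latticeNear 0 (R * 2 ^ j) :=
    mem_dyadicIndex (by rwa [xjk_zero, Hdist_self])
  exact Infinite.of_injective (fun j : ℕ => (⟨j, 0, hzero j⟩ : DyadicIndex R))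
    fun _ _ h => congrArg Sigma.fst h

lemma summable_dyadicIndex {R : ℝ} (hR : 1 ≤ R) {q : ℝ} (hq : 0 ≤ q) (hq' : 16 * q < 1) :
    Summable fun i : DyadicIndex R => q ^ i.1 := by
  refine (summable_sigma_of_nonneg fun i => by positivity).2
    ⟨fun j => (hasSum_fintype _).summable, ?_⟩
  refine Summable.of_nonneg_of_le (fun j => tsum_nonneg fun k => by positivity) (fun j => ?_)
    ((summable_geometric_of_lt_one (by positivity) hq').mul_left (27 * R ^ 4))
  have hRj : 1 ≤ R * 2 ^ j := one_le_mul_of_one_le_of_one_le hR (one_le_pow₀ one_le_two)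
  calc ∑' _ : latticeNear 0 (R * 2 ^ j), q ^ j
      = (latticeNear 0 (R * 2 ^ j)).card * q ^ j := by simp
    _ ≤ 27 * (R * 2 ^ j) ^ 4 * q ^ j := by
        gcongr
        exact card_latticeNear_le _ hRj
    _ = 27 * R ^ 4 * (16 * q) ^ j := by
        rw [mul_pow, mul_pow, ← pow_mul, mul_comm j 4, pow_mul]
        norm_num
        ring

lemma gaugeHausdorff_SXi_eq_zero {C : ℝ} (hC : 0 < C) {J : ℕ → ℕ} (hJ : Function.Injective J)
    {ξ d : ℝ} (hξ : 0 ≤ ξ) (hd : 0 < d) (hdξ : 4 < ξ * d) :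
    gaugeHausdorff d (SXi C J ξ) = 0 := by
  refine gaugeHausdorff_eq_zero_of_subset (SXi_subset_SXi_id hJ) ?_
  have := infinite_dyadicIndex (R := 2 + C) (by positivity)
  have hq : 16 * (2 : ℝ) ^ (-(ξ * d)) < 1 := by
    rw [Real.rpow_neg two_pos.le, mul_inv_lt_iff₀ (by positivity), one_mul]
    exact lt_of_eq_of_lt (by norm_num) (Real.rpow_lt_rpow_of_exponent_lt one_lt_two hdξ)
  refine gaugeHausdorff_eq_zero_of_summable hd (ι := DyadicIndex (2 + C))
    (c := fun i => xjk i.1 i.2) (r := fun i => 2 * C * 2 ^ (-(i.1 : ℝ) * ξ))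
    (fun i => by positivity) ?_ fun x hx => ?_
  · refine ((summable_dyadicIndex (by linarith) (by positivity) hq).mul_left
      ((2 * C) ^ d)).congr fun i => ?_
    rw [← Real.rpow_mul_natCast two_pos.le, Real.mul_rpow (y := 2 ^ _) (by positivity)
      (by positivity), ← Real.rpow_mul two_pos.le]
    ring_nf
  · have hnear {j : ℕ} {k : ℤ × ℤ × ℤ} (h : Hdist x (xjk j k) ≤ C * 2 ^ (-(j : ℝ) * ξ)) :
        k ∈ latticeNear 0 ((2 + C) * 2 ^ j) := by
      refine mem_dyadicIndex ((Hdist_triangle 0 x _).trans ?_)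
      rw [Hdist_zero_left]
      refine add_le_add (Hnorm_le_two_of_mem_C0 hx.1) (h.trans (mul_le_of_le_one_right hC.le ?_))
      refine Real.rpow_le_one_of_one_le_of_nonpos one_le_two ?_
      rw [neg_mul, neg_nonpos]
      positivity
    refine (hx.2.preimage (f := fun i : DyadicIndex (2 + C) => (i.1, i.2.1)) ?_).mono ?_
    · exact fun ⟨j, k⟩ hk => ⟨⟨j, k, hnear hk⟩, rfl⟩
    · intro i hi
      have hi' : Hdist x (xjk i.1 i.2) ≤ C * 2 ^ (-(i.1 : ℝ) * ξ) := hi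
      rw [Set.mem_ofPred_eq, mem_Hball, Hdist_comm, mul_assoc]
      exact hi'.trans_lt (lt_mul_of_one_lt_left (by positivity) one_lt_two)

/-! ### Digit expansions -/

/-- The digits of the dyadic expansion of the Heisenberg group: coset representatives of
`2∘ℤ³` in `ℤ³`. -/
abbrev HDigit : Type := Fin 2 × Fin 2 × Fin 4

/-- A digit seen as an element of `ℤ³`. -/
def digitVal (e : HDigit) : ℤ × ℤ × ℤ := (e.1.val, e.2.1.val, e.2.2.val)

/-- The `k ∈ ℤ³` whose dyadic point `x_{n,k}` is the product of the first `n` terms of the digit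
expansion, see `digitTrunc_succ`. -/
def digitPrefix (a : ℕ → HDigit) : ℕ → ℤ × ℤ × ℤ
  | 0 => 0
  | n + 1 =>
    let k := digitPrefix a n
    let e := digitVal (a n)
    (2 * k.1 + e.1, 2 * k.2.1 + e.2.1, 4 * k.2.2 + e.2.2 + 4 * (k.2.1 * e.1 - k.1 * e.2.1))

/-- The partial product `x_{1,a₀} ∗ ⋯ ∗ x_{n,aₙ₋₁}` of a digit expansion. -/
def digitTrunc (a : ℕ → HDigit) (n : ℕ) : H3 := xjk n (digitPrefix a n)

section

variable {a b : ℕ → HDigit} {m n : ℕ}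

lemma digitTrunc_succ (a : ℕ → HDigit) (n : ℕ) :
    digitTrunc a (n + 1) = Hmul (digitTrunc a n) (xjk (n + 1) (digitVal (a n))) := by
  have hpow : (2 : ℝ) ^ (-(n : ℤ)) = 2 * 2 ^ (-((n : ℤ) + 1)) := by
    rw [neg_add, zpow_add₀ two_ne_zero]
    norm_num
    ring
  simp only [digitTrunc, digitPrefix, xjk, Hdil, latticePt, Hmul, Nat.cast_succ, hpow]
  push_cast
  ext <;> ring

lemma Hnorm_xjk (j : ℕ) (k : ℤ × ℤ × ℤ) : Hnorm (xjk j k) = (1 / 2) ^ j * Hnorm (latticePt k) := by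
  rw [xjk, Hnorm_Hdil (by positivity), zpow_neg, zpow_natCast, one_div, inv_pow]

lemma Hnorm_latticePt_digitVal_le (e : HDigit) : Hnorm (latticePt (digitVal e)) ≤ 2 := by
  obtain ⟨p, q, r⟩ := e
  have hp : (p.val : ℝ) ≤ 1 := by exact_mod_cast Nat.le_of_lt_succ p.isLt
  have hq : (q.val : ℝ) ≤ 1 := by exact_mod_cast Nat.le_of_lt_succ q.isLt
  have hr : (r.val : ℝ) ≤ 3 := by exact_mod_cast Nat.le_of_lt_succ r.isLt
  refine (Hnorm_le_two_mul (R := 1) zero_le_one ?_ ?_ ?_).trans_eq (mul_one 2) <;>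
    simpa only [latticePt, digitVal, Int.cast_natCast, Nat.abs_cast, one_pow, mul_one]

lemma Hdist_digitTrunc_succ_le (a : ℕ → HDigit) (n : ℕ) :
    Hdist (digitTrunc a n) (digitTrunc a (n + 1)) ≤ 1 * (1 / 2) ^ n := by
  rw [digitTrunc_succ, Hdist_Hmul_self, ← Nat.cast_succ, Hnorm_xjk]
  calc (1 / 2 : ℝ) ^ (n + 1) * Hnorm (latticePt (digitVal (a n)))
      ≤ (1 / 2) ^ (n + 1) * 2 := by gcongr; exact Hnorm_latticePt_digitVal_le _
    _ = 1 * (1 / 2) ^ n := by ring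

/-- The point with digit expansion `a`, the limit of the partial products `digitTrunc a n`. -/
def digitPoint (a : ℕ → HDigit) : H3 :=
  (exists_Hdist_le_of_geometric (Hdist_digitTrunc_succ_le a)).choose

lemma Hdist_digitTrunc_digitPoint_le (a : ℕ → HDigit) (n : ℕ) :
    Hdist (digitTrunc a n) (digitPoint a) ≤ 2 * (1 / 2) ^ n :=
  ((exists_Hdist_le_of_geometric (Hdist_digitTrunc_succ_le a)).choose_spec n).trans_eq
    (by rw [mul_one])

lemma digitPrefix_injOn (h : digitPrefix a n = digitPrefix b n) : ∀ i < n, a i = b i := by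
  induction n with
  | zero => simp
  | succ n ih =>
    simp only [digitPrefix, digitVal, Prod.mk.injEq] at h
    obtain ⟨hp, hq, hr⟩ := h
    have hp' : (digitPrefix a n).1 = (digitPrefix b n).1 ∧ (a n).1 = (b n).1 := by omega
    have hq' : (digitPrefix a n).2.1 = (digitPrefix b n).2.1 ∧ (a n).2.1 = (b n).2.1 := by omega
    rw [hp'.1, hp'.2, hq'.1, hq'.2] at hr
    have hr' : (digitPrefix a n).2.2 = (digitPrefix b n).2.2 ∧ (a n).2.2 = (b n).2.2 := by omega
    have hprefix : digitPrefix a n = digitPrefix b n :=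
      Prod.ext hp'.1 (Prod.ext hq'.1 hr'.1)
    intro i hi
    rcases Nat.lt_succ_iff_lt_or_eq.1 hi with hi | rfl
    · exact ih hprefix i hi
    · exact Prod.ext hp'.2 (Prod.ext hq'.2 hr'.2)

lemma digitTrunc_eq_of_zero (hmn : m ≤ n) (h : ∀ i, m ≤ i → i < n → a i = 0) :
    digitTrunc a n = digitTrunc a m := by
  induction n, hmn using Nat.le_induction with
  | base => rfl
  | succ n hmn ih =>
    have hzero : xjk (n + 1) (digitVal (a n)) = 0 := by
      rw [h n hmn n.lt_succ_self]
      exact xjk_zero _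
    rw [digitTrunc_succ, hzero, ← ih fun i hi hin => h i hi (hin.trans n.lt_succ_self)]
    simp [Hmul]

lemma mem_C0_of_Hdist_le {x : H3} (h : Hdist (1 / 2, 1 / 2, 1 / 2) x ≤ 1 / 8) : x ∈ C0 := by
  have hp := abs_le.1 ((abs_sub_fst_le_Hdist _ x).trans h)
  have hq := abs_le.1 ((abs_sub_snd_le_Hdist _ x).trans h)
  have hr := abs_le.1 ((abs_sub_thd_le_Hdist_sq _ x).trans
    (pow_le_pow_left₀ (Hdist_nonneg _ _) h 2))
  norm_num at hp hq hr
  refine ⟨⟨?_, ?_⟩, ⟨?_, ?_⟩, ?_, ?_⟩ <;> linarith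

/-- The digits of the centre `(1/2, 1/2, 1/2)` of the unit cube. -/
def centerDigits : ℕ → HDigit := Pi.single 0 (1, 1, 2)

lemma digitPoint_mem_C0 (h : ∀ n < 4, a n = centerDigits n) : digitPoint a ∈ C0 := by
  refine mem_C0_of_Hdist_le ?_
  have htrunc : digitTrunc a 4 = (1 / 2, 1 / 2, 1 / 2) := by
    rw [digitTrunc_eq_of_zero (m := 1) (by norm_num) fun i h₁ h₄ => by
      rw [h i h₄, centerDigits, Pi.single_eq_of_ne (by omega)]]
    simp [digitTrunc, digitPrefix, digitVal, h 0, centerDigits, xjk, Hdil, latticePt]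
    norm_num
  rw [← htrunc]
  exact (Hdist_digitTrunc_digitPoint_le a 4).trans_eq (by norm_num)

end

/-! ### Random digits -/

/-- The law of a sequence of independent, uniformly distributed elements of `D`. -/
def uniformDigits (D : Type*) [Fintype D] [Nonempty D] [MeasurableSpace D] : Measure (ℕ → D) :=
  Measure.infinitePi fun _ => (PMF.uniformOfFintype D).toMeasure

instance {D : Type*} [Fintype D] [Nonempty D] [MeasurableSpace D] :
    IsProbabilityMeasure (uniformDigits D) := by
  unfold uniformDigits; infer_instance

lemma uniformDigits_cylinder_le {D : Type*} [Fintype D] [Nonempty D] [MeasurableSpace D]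
    [MeasurableSingletonClass D] (A : Set ℕ) [DecidablePred (· ∈ A)] (b w : ℕ → D) (n : ℕ) :
    uniformDigits D {ω | ∀ i < n, A.piecewise ω b i = w i} ≤
      (Fintype.card D : ℝ≥0∞)⁻¹ ^ Nat.count (· ∈ A) n := by
  have hsub : {ω | ∀ i < n, A.piecewise ω b i = w i} ⊆
      Set.pi ((Finset.range n).filter (· ∈ A)) fun i => {w i} := by
    intro ω hω i hi
    obtain ⟨hin, hiA⟩ := Finset.mem_filter.1 (Finset.mem_coe.1 hi)
    simpa [hiA] using hω i (Finset.mem_range.1 hin)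
  refine (measure_mono hsub).trans_eq ?_
  rw [uniformDigits, Measure.infinitePi_pi _ fun i _ => measurableSet_singleton _]
  simp only [PMF.toMeasure_apply_singleton _ _ (measurableSet_singleton _),
    PMF.uniformOfFintype_apply, Finset.prod_const, Nat.count_eq_card_filter_range]

section

variable {A : Set ℕ} [DecidablePred (· ∈ A)]

lemma uniformDigits_digitPrefix_eq_le (b : ℕ → HDigit) (n : ℕ) (k : ℤ × ℤ × ℤ) :
    uniformDigits HDigit {ω | digitPrefix (A.piecewise ω b) n = k} ≤
      ENNReal.ofReal ((1 / 2) ^ (4 * Nat.count (· ∈ A) n)) := by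
  rcases Set.eq_empty_or_nonempty {ω | digitPrefix (A.piecewise ω b) n = k} with hempty | ⟨ω₀, hω₀⟩
  · simp [hempty]
  calc uniformDigits HDigit {ω | digitPrefix (A.piecewise ω b) n = k}
      ≤ uniformDigits HDigit {ω | ∀ i < n, A.piecewise ω b i = A.piecewise ω₀ b i} :=
        measure_mono fun ω hω => digitPrefix_injOn (hω.trans hω₀.symm)
    _ ≤ (Fintype.card HDigit : ℝ≥0∞)⁻¹ ^ Nat.count (· ∈ A) n := uniformDigits_cylinder_le _ _ _ _
    _ = ENNReal.ofReal ((1 / 2) ^ (4 * Nat.count (· ∈ A) n)) := by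
        rw [pow_mul, ENNReal.ofReal_pow (by positivity)]
        norm_num [Fintype.card_prod, ENNReal.ofReal_div_of_pos]

lemma uniformDigits_dyadic_ball_le (b : ℕ → HDigit) (n : ℕ) (c : H3) :
    uniformDigits HDigit {ω | Hdist c (digitPoint (A.piecewise ω b)) ≤ (1 / 2) ^ n} ≤
      ENNReal.ofReal (2187 * (1 / 2) ^ (4 * Nat.count (· ∈ A) n)) := by
  have hsub : {ω | Hdist c (digitPoint (A.piecewise ω b)) ≤ (1 / 2) ^ n} ⊆
      ⋃ k ∈ latticeNear (Hdil (2 ^ n) c) 3, {ω | digitPrefix (A.piecewise ω b) n = k} := by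
    intro ω hω
    refine Set.mem_biUnion (mem_latticeNear_of_xjk ?_) rfl
    calc Hdist c (digitTrunc (A.piecewise ω b) n)
        ≤ Hdist c (digitPoint (A.piecewise ω b)) +
            Hdist (digitPoint (A.piecewise ω b)) (digitTrunc (A.piecewise ω b) n) :=
          Hdist_triangle _ _ _
      _ ≤ (1 / 2) ^ n + 2 * (1 / 2) ^ n := by
          refine add_le_add hω ?_
          rw [Hdist_comm]
          exact Hdist_digitTrunc_digitPoint_le _ n
      _ = 3 * (1 / 2) ^ n := by ring
  refine (measure_mono hsub).trans ((measure_biUnion_finset_le _ _).trans ?_)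
  refine (Finset.sum_le_card_nsmul _ _ _ fun k _ => uniformDigits_digitPrefix_eq_le b n k).trans ?_
  rw [nsmul_eq_mul, ← ENNReal.ofReal_natCast, ← ENNReal.ofReal_mul (Nat.cast_nonneg _)]
  gcongr
  exact (card_latticeNear_le _ (by norm_num)).trans_eq (by norm_num)

lemma half_pow_le_mul_rpow {d K : ℝ} (hd : 0 ≤ d) {n N : ℕ} (hcount : d * n ≤ N + K)
    {r : ℝ} (hr : (1 / 2) ^ (n + 1) ≤ r) : (1 / 2 : ℝ) ^ N ≤ 2 ^ (K + d) * r ^ d := by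
  calc (1 / 2 : ℝ) ^ N = 2 ^ (-(N : ℝ)) := by
        rw [Real.rpow_neg two_pos.le, Real.rpow_natCast, one_div, inv_pow]
    _ ≤ 2 ^ (K + d + -(n + 1) * d) := Real.rpow_le_rpow_of_exponent_le one_le_two (by linarith)
    _ = 2 ^ (K + d) * ((1 / 2) ^ (n + 1)) ^ d := by
        rw [Real.rpow_add two_pos, Real.rpow_mul two_pos.le, Real.rpow_neg two_pos.le, one_div,
          inv_pow]
        norm_cast
    _ ≤ 2 ^ (K + d) * r ^ d := by gcongr

lemma exists_uniformDigits_ball_le {d K : ℝ} (hd : 0 ≤ d) (hK : 0 ≤ K)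
    (hcount : ∀ n : ℕ, d * n ≤ 4 * Nat.count (· ∈ A) n + K) (b : ℕ → HDigit) :
    ∃ K' : ℝ, ∀ c r, 0 < r →
      uniformDigits HDigit ((fun ω => digitPoint (A.piecewise ω b)) ⁻¹' Hball c r) ≤
        ENNReal.ofReal (K' * r ^ d) := by
  refine ⟨2187 * 2 ^ (K + d), fun c r hr => ?_⟩
  rcases le_or_gt 1 r with hr1 | hr1
  · refine prob_le_one.trans (ENNReal.one_le_ofReal.2 ?_)
    have h2 : (1 : ℝ) ≤ 2 ^ (K + d) := Real.one_le_rpow one_le_two (by positivity)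
    exact one_le_mul_of_one_le_of_one_le (by linarith) (Real.one_le_rpow hr1 hd)
  · obtain ⟨n, hnr, hrn⟩ := exists_nat_pow_near_of_lt_one hr hr1.le (by norm_num : (0 : ℝ) < 1 / 2)
      (by norm_num)
    calc uniformDigits HDigit ((fun ω => digitPoint (A.piecewise ω b)) ⁻¹' Hball c r)
        ≤ uniformDigits HDigit {ω | Hdist c (digitPoint (A.piecewise ω b)) ≤ (1 / 2) ^ n} :=
          measure_mono fun ω hω => (le_of_lt hω).trans hrn
      _ ≤ ENNReal.ofReal (2187 * (1 / 2) ^ (4 * Nat.count (· ∈ A) n)) :=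
          uniformDigits_dyadic_ball_le b n c
      _ ≤ ENNReal.ofReal (2187 * 2 ^ (K + d) * r ^ d) := by
          rw [mul_assoc]
          gcongr
          exact half_pow_le_mul_rpow hd (by exact_mod_cast hcount n) hnr.le

end

/-! ### Sparse blocks -/

/-- A sequence of block starts `j i` growing so fast that the blocks `[j i, ⌈ξ * j i⌉)` are
negligible up to the start of the next one. -/
structure IsSparse (ξ : ℝ) (j : ℕ → ℕ) : Prop where
  four_le : ∀ i, 4 ≤ j i
  mul_le : ∀ i, (i + 2) * ⌈ξ * j i⌉₊ ≤ j (i + 1)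

/-- The positions outside the blocks `[j i, ⌈ξ * j i⌉)`, where digits are chosen freely. The
first four digits are reserved to keep the point inside the unit cube. -/
def freePositions (ξ : ℝ) (j : ℕ → ℕ) : Set ℕ :=
  {n | 4 ≤ n ∧ ∀ i, n ∉ Set.Ico (j i) ⌈ξ * j i⌉₊}

lemma count_add_le_of_Ico_subset {A : Set ℕ} [DecidablePred (· ∈ A)] {m n : ℕ} (hmn : m ≤ n)
    (h : Set.Ico m n ⊆ A) :
    Nat.count (· ∈ A) m + n ≤ Nat.count (· ∈ A) n + m := by
  obtain ⟨l, rfl⟩ := Nat.exists_eq_add_of_le hmn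
  have hl : Nat.count (fun i => m + i ∈ A) l = l :=
    Nat.count_of_forall fun i hi => h ⟨Nat.le_add_right m i, Nat.add_lt_add_left hi m⟩
  rw [Nat.count_add, hl]
  omega

lemma le_ceil_mul {ξ : ℝ} (hξ : 1 ≤ ξ) (n : ℕ) : n ≤ ⌈ξ * n⌉₊ := by
  rw [← Nat.cast_le (α := ℝ)]
  exact (le_mul_of_one_le_left (Nat.cast_nonneg _) hξ).trans (Nat.le_ceil _)

namespace IsSparse

variable {ξ : ℝ} {j : ℕ → ℕ}

lemma ceil_le (h : IsSparse ξ j) (i : ℕ) : ⌈ξ * j i⌉₊ ≤ j (i + 1) :=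
  (Nat.le_mul_of_pos_left _ (by omega)).trans (h.mul_le i)

lemma strictMono (h : IsSparse ξ j) (hξ : 1 ≤ ξ) : StrictMono j := by
  refine strictMono_nat_of_lt_succ fun i => ?_
  have h₁ := le_ceil_mul hξ (j i)
  have h₂ := h.mul_le i
  have h₃ := h.four_le i
  nlinarith

lemma Ico_subset_freePositions (h : IsSparse ξ j) (hξ : 1 ≤ ξ) (i : ℕ) :
    Set.Ico ⌈ξ * j i⌉₊ (j (i + 1)) ⊆ freePositions ξ j := by
  rintro n ⟨hn, hn'⟩
  refine ⟨(h.four_le i).trans ((le_ceil_mul hξ (j i)).trans hn), fun l ⟨hl, hl'⟩ => ?_⟩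
  have hmono := (h.strictMono hξ).monotone
  rcases Nat.lt_or_ge i l with hil | hli
  · exact absurd ((hmono hil).trans hl) (not_le.2 hn')
  · have hceil : ⌈ξ * j l⌉₊ ≤ ⌈ξ * j i⌉₊ := by
      gcongr
      exact hmono hli
    omega

variable [DecidablePred (· ∈ freePositions ξ j)]

lemma density_le_count (h : IsSparse ξ j) (hξ : 1 ≤ ξ) (i : ℕ) :
    (i + 1) * j (i + 1) ≤ (i + 2) * Nat.count (· ∈ freePositions ξ j) (j (i + 1)) := by
  have hcount := count_add_le_of_Ico_subset (h.ceil_le i) (h.Ico_subset_freePositions hξ i)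
  nlinarith [h.mul_le i]

lemma mul_ceil_le_count_add (h : IsSparse ξ j) (hξ : 1 ≤ ξ) {d : ℝ}
    (hd : 0 ≤ d) {i : ℕ} (hdi : d * ξ ≤ (i + 1) / (i + 2)) :
    d * ⌈ξ * j (i + 1)⌉₊ ≤ Nat.count (· ∈ freePositions ξ j) (j (i + 1)) + d := by
  have hdens : ((i : ℝ) + 1) * j (i + 1) ≤
      (i + 2) * Nat.count (· ∈ freePositions ξ j) (j (i + 1)) := by
    exact_mod_cast h.density_le_count hξ i
  calc d * ⌈ξ * j (i + 1)⌉₊ ≤ d * (ξ * j (i + 1) + 1) := by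
        gcongr
        exact (Nat.ceil_lt_add_one (by positivity)).le
    _ = d * ξ * j (i + 1) + d := by ring
    _ ≤ (i + 1) / (i + 2) * j (i + 1) + d := by gcongr
    _ ≤ Nat.count (· ∈ freePositions ξ j) (j (i + 1)) + d := by
        rw [div_mul_eq_mul_div]
        gcongr
        exact div_le_of_le_mul₀ (by positivity) (by positivity) (by linarith)

/-- Up to the end of the block starting at `j (i + 1)`, the free positions before that block
suffice; past its end all positions are free. -/
lemma mul_le_count_add (h : IsSparse ξ j) (hξ : 1 ≤ ξ) {d : ℝ} (hd : 0 ≤ d) {i : ℕ}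
    (hdi : d * ξ ≤ (i + 1) / (i + 2)) {n : ℕ} (hn : n ∈ Set.Ico (j (i + 1)) (j (i + 2))) :
    d * n ≤ Nat.count (· ∈ freePositions ξ j) n + d := by
  set N := ⌈ξ * j (i + 1)⌉₊ with hN
  have hblock := h.mul_ceil_le_count_add hξ hd hdi
  rw [← hN] at hblock
  rcases le_total n N with hnN | hNn
  · calc d * n ≤ d * N := by gcongr
      _ ≤ Nat.count (· ∈ freePositions ξ j) (j (i + 1)) + d := hblock
      _ ≤ Nat.count (· ∈ freePositions ξ j) n + d := by gcongr; exact hn.1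
  · have hd1 : d ≤ 1 :=
      calc d ≤ d * ξ := le_mul_of_one_le_right hd hξ
        _ ≤ (i + 1) / (i + 2) := hdi
        _ ≤ 1 := div_le_one_of_le₀ (by linarith) (by positivity)
    have hfree : (Nat.count (· ∈ freePositions ξ j) N : ℝ) + n ≤
        Nat.count (· ∈ freePositions ξ j) n + N := by
      exact_mod_cast count_add_le_of_Ico_subset hNn
        ((Set.Ico_subset_Ico_right hn.2.le).trans (h.Ico_subset_freePositions hξ (i + 1)))
    calc d * n = d * N + d * (n - N) := by ring
      _ ≤ Nat.count (· ∈ freePositions ξ j) (j (i + 1)) + d + 1 * (n - N) := by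
          gcongr
          exact sub_nonneg.2 (by exact_mod_cast hNn)
      _ ≤ Nat.count (· ∈ freePositions ξ j) N + d + 1 * (n - N) := by
          gcongr
          exact le_ceil_mul hξ (j (i + 1))
      _ ≤ Nat.count (· ∈ freePositions ξ j) n + d := by linarith

lemma exists_mul_le_count_add (h : IsSparse ξ j) (hξ : 1 ≤ ξ) {d : ℝ} (hd : 0 ≤ d)
    (hdξ : d * ξ < 1) :
    ∃ K ≥ 0, ∀ n : ℕ, d * n ≤ Nat.count (· ∈ freePositions ξ j) n + K := by
  obtain ⟨i₀, hi₀⟩ : ∃ i₀ : ℕ, ∀ i ≥ i₀, d * ξ ≤ (i + 1) / (i + 2) := by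
    obtain ⟨i₀, hi₀⟩ := exists_nat_one_div_lt (sub_pos.2 hdξ)
    refine ⟨i₀, fun i hi => ?_⟩
    have hle : 1 / ((i : ℝ) + 2) ≤ 1 / (i₀ + 1) := by
      gcongr
      norm_num
    have heq : ((i : ℝ) + 1) / (i + 2) = 1 - 1 / (i + 2) := by field_simp; ring
    linarith
  refine ⟨d * j (i₀ + 1) + d, by positivity, fun n => ?_⟩
  rcases le_total n (j (i₀ + 1)) with hn | hn
  · have hle : d * n ≤ d * j (i₀ + 1) := by gcongr
    linarith [(Nat.count (· ∈ freePositions ξ j) n).cast_nonneg (α := ℝ)]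
  · have hmono : StrictMono fun i => j (i₀ + i + 1) := fun a b hab =>
      h.strictMono hξ (by omega)
    obtain ⟨i, hin⟩ : ∃ i, n ∈ Set.Ico (j (i₀ + i + 1)) (j (i₀ + i + 2)) := by
      simpa [add_assoc] using (iUnion_Ico_map_succ_eq_Ici (fun i => hmono.monotone (Nat.zero_le i))
        hmono.not_bddAbove_range_of_isSuccArchimedean).ge hn
    have hK : 0 ≤ d * j (i₀ + 1) := by positivity
    linarith [h.mul_le_count_add hξ hd (hi₀ _ (Nat.le_add_right i₀ i)) hin]

end IsSparse

lemma exists_isSparse_comp {J : ℕ → ℕ} (hJ : Function.Injective J) (ξ : ℝ) :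
    ∃ m : ℕ → ℕ, IsSparse ξ (J ∘ m) := by
  have hlarge (N : ℕ) : ∃ m, N ≤ J m := (hJ.nat_tendsto_atTop.eventually_ge_atTop N).exists
  choose f hf using hlarge
  let m : ℕ → ℕ :=
    Nat.rec (f 4) fun i l => f (max 4 ((i + 2) * ⌈ξ * J l⌉₊))
  refine ⟨m, fun i => ?_, fun i => (le_max_right _ _).trans (hf _)⟩
  cases i with
  | zero => exact hf 4
  | succ i => exact (le_max_left _ _).trans (hf _)

/-! ### Points of prescribed approximation rate -/

open scoped Classical in
/-- The point whose digits are those of `ω` at the free positions and those of the centre of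
the unit cube elsewhere; it is close to a dyadic point at the start of each block. -/
def sparsePoint (ξ : ℝ) (j : ℕ → ℕ) (ω : ℕ → HDigit) : H3 :=
  digitPoint ((freePositions ξ j).piecewise ω centerDigits)

lemma sparsePoint_mem_C0 (ξ : ℝ) (j : ℕ → ℕ) (ω : ℕ → HDigit) : sparsePoint ξ j ω ∈ C0 := by
  classical
  exact digitPoint_mem_C0 fun _ hn =>
    Set.piecewise_eq_of_notMem _ _ _ fun h => absurd h.1 (not_le.2 hn)

lemma IsSparse.exists_Hdist_sparsePoint_le {ξ : ℝ} {j : ℕ → ℕ} (h : IsSparse ξ j) (hξ : 1 ≤ ξ)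
    (ω : ℕ → HDigit) (i : ℕ) :
    ∃ k, Hdist (sparsePoint ξ j ω) (xjk (j i) k) ≤ 2 * (2 : ℝ) ^ (-(j i : ℝ) * ξ) := by
  classical
  set a := (freePositions ξ j).piecewise ω centerDigits with ha
  have hzero (n : ℕ) (hn : j i ≤ n) (hn' : n < ⌈ξ * j i⌉₊) : a n = 0 := by
    have hfour := h.four_le i
    rw [ha, Set.piecewise_eq_of_notMem _ _ _ fun hmem => hmem.2 i ⟨hn, hn'⟩, centerDigits,
      Pi.single_eq_of_ne (by omega)]
  refine ⟨digitPrefix a (j i), ?_⟩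
  calc Hdist (sparsePoint ξ j ω) (xjk (j i) (digitPrefix a (j i)))
      = Hdist (digitTrunc a ⌈ξ * j i⌉₊) (digitPoint a) := by
        rw [digitTrunc_eq_of_zero (le_ceil_mul hξ _) hzero, Hdist_comm, sparsePoint, ha, digitTrunc]
    _ ≤ 2 * (1 / 2) ^ ⌈ξ * j i⌉₊ := Hdist_digitTrunc_digitPoint_le _ _
    _ = 2 * (2 : ℝ) ^ (-(⌈ξ * j i⌉₊ : ℝ)) := by
        rw [Real.rpow_neg two_pos.le, Real.rpow_natCast, one_div, inv_pow]
    _ ≤ 2 * (2 : ℝ) ^ (-(j i : ℝ) * ξ) := by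
        gcongr
        · exact one_le_two
        · linarith [Nat.le_ceil (ξ * j i)]

lemma approximable_sparsePoint {C : ℝ} (hC : 0 < C) {J m : ℕ → ℕ} {ξ t : ℝ}
    (h : IsSparse ξ (J ∘ m)) (hξ : 1 ≤ ξ) (ht : t < ξ) (ω : ℕ → HDigit) :
    Approximable C J t (sparsePoint ξ (J ∘ m) ω) := by
  choose k hk using h.exists_Hdist_sparsePoint_le hξ ω
  have hmono := h.strictMono hξ
  have hscale : ∀ᶠ i in Filter.atTop, 2 * (2 : ℝ) ^ (-((J ∘ m) i : ℝ) * ξ) ≤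
      C * (2 : ℝ) ^ (-((J ∘ m) i : ℝ) * t) := by
    have htend : Filter.Tendsto (fun i => (2 : ℝ) ^ ((ξ - t) * ((J ∘ m) i : ℝ)))
        Filter.atTop Filter.atTop :=
      (tendsto_rpow_atTop_of_base_gt_one 2 one_lt_two).comp
        ((tendsto_natCast_atTop_atTop.comp hmono.tendsto_atTop).const_mul_atTop (sub_pos.2 ht))
    filter_upwards [htend.eventually_ge_atTop (2 / C)] with i hi
    calc 2 * (2 : ℝ) ^ (-((J ∘ m) i : ℝ) * ξ)
        ≤ C * 2 ^ ((ξ - t) * ((J ∘ m) i : ℝ)) * 2 ^ (-((J ∘ m) i : ℝ) * ξ) := by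
          gcongr
          rwa [mul_comm, ← div_le_iff₀ hC]
      _ = C * (2 : ℝ) ^ (-((J ∘ m) i : ℝ) * t) := by
          rw [mul_assoc, ← Real.rpow_add two_pos]
          ring_nf
  have hinj : Function.Injective fun i => (m i, k i) := fun a b hab =>
    hmono.injective.of_comp (congrArg Prod.fst hab)
  refine ((Nat.frequently_atTop_iff_infinite.1 hscale.frequently).image hinj.injOn).mono ?_
  rintro _ ⟨i, hi, rfl⟩
  exact (hk i).trans hi

lemma IsSparse.exists_ball_le {ξ d : ℝ} {j : ℕ → ℕ} (h : IsSparse ξ j) (hξ : 1 ≤ ξ) (hd : 0 ≤ d)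
    (hdξ : d < 4 / ξ) :
    ∃ K : ℝ, ∀ c r, 0 < r → uniformDigits HDigit (sparsePoint ξ j ⁻¹' Hball c r) ≤
      ENNReal.ofReal (K * r ^ d) := by
  classical
  have hdξ' : d / 4 * ξ < 1 := by
    rw [lt_div_iff₀ (by linarith)] at hdξ
    linarith
  obtain ⟨K, hK, hcount⟩ := h.exists_mul_le_count_add hξ (by positivity) hdξ'
  exact exists_uniformDigits_ball_le hd (mul_nonneg zero_le_four hK)
    (fun n => by linarith [hcount n]) centerDigits

lemma ae_not_approximable_sparsePoint {C : ℝ} (hC : 0 < C) {J : ℕ → ℕ} (hJ : Function.Injective J)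
    {j : ℕ → ℕ} {ξ ξ' : ℝ} (h : IsSparse ξ j) (hξ : 1 ≤ ξ) (hξξ' : ξ < ξ') :
    ∀ᵐ ω ∂uniformDigits HDigit, ¬Approximable C J ξ' (sparsePoint ξ j ω) := by
  have hξ' : 0 < ξ' := by linarith
  obtain ⟨d, hd', hd⟩ : ∃ d, 4 / ξ' < d ∧ d < 4 / ξ :=
    exists_between (div_lt_div_of_pos_left four_pos (by linarith) hξξ')
  have hd0 : 0 < d := (by positivity : 0 < 4 / ξ').trans hd'
  obtain ⟨K, hK⟩ := h.exists_ball_le hξ hd0.le hd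
  have hnull : gaugeHausdorff d (SXi C J ξ') = 0 :=
    gaugeHausdorff_SXi_eq_zero hC hJ hξ'.le hd0 ((div_lt_iff₀' hξ').1 hd')
  refine measure_mono_null (fun ω hω => ?_)
    (measure_preimage_eq_zero_of_gaugeHausdorff_eq_zero hd0.le hK hnull)
  exact ⟨sparsePoint_mem_C0 ξ j ω, not_not.1 hω⟩

lemma ae_sparsePoint_mem_SXiTilde {C : ℝ} (hC : 0 < C) {J m : ℕ → ℕ} (hJ : Function.Injective J)
    {ξ : ℝ} (h : IsSparse ξ (J ∘ m)) (hξ : 1 ≤ ξ) :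
    ∀ᵐ ω ∂uniformDigits HDigit, sparsePoint ξ (J ∘ m) ω ∈ SXiTilde C J ξ := by
  obtain ⟨u, -, hξu, hu⟩ := exists_seq_strictAnti_tendsto ξ
  have hall : ∀ᵐ ω ∂uniformDigits HDigit, ∀ n,
      ¬Approximable C J (u n) (sparsePoint ξ (J ∘ m) ω) :=
    ae_all_iff.2 fun n => ae_not_approximable_sparsePoint hC hJ h hξ (hξu n)
  filter_upwards [hall] with ω hω
  refine ⟨sparsePoint_mem_C0 _ _ ω, approxRate_eq (by linarith)
    (fun t ht => approximable_sparsePoint hC h hξ ht ω) fun t ht happ => ?_⟩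
  obtain ⟨n, hn⟩ := (hu.eventually_lt_const ht).exists
  exact hω n (happ.anti hC.le hn.le)

lemma gaugeHausdorff_SXiTilde_ne_zero {C : ℝ} (hC : 0 < C) {J : ℕ → ℕ}
    (hJ : Function.Injective J) {ξ d : ℝ} (hξ : 1 ≤ ξ) (hd : 0 ≤ d) (hdξ : d < 4 / ξ) :
    gaugeHausdorff d (SXiTilde C J ξ) ≠ 0 := by
  intro hzero
  obtain ⟨m, hm⟩ := exists_isSparse_comp hJ ξ
  obtain ⟨K, hK⟩ := hm.exists_ball_le hξ hd hdξ
  have hnull : ∀ᵐ ω ∂uniformDigits HDigit, sparsePoint ξ (J ∘ m) ω ∉ SXiTilde C J ξ :=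
    measure_mono_null (fun _ => not_not.1)
      (measure_preimage_eq_zero_of_gaugeHausdorff_eq_zero hd hK hzero)
  obtain ⟨ω, hω, hω'⟩ := ((ae_sparsePoint_mem_SXiTilde hC hJ hm hξ).and hnull).exists
  exact hω' hω

lemma gaugeHausdorff_SXiTilde_eq_zero {C : ℝ} (hC : 0 < C) {J : ℕ → ℕ}
    (hJ : Function.Injective J) {ξ d : ℝ} (hd : 0 < d) (hdξ : 4 < ξ * d) :
    gaugeHausdorff d (SXiTilde C J ξ) = 0 := by
  obtain ⟨ξ', hξ'd, hξ'ξ⟩ := exists_between ((div_lt_iff₀ hd).2 hdξ)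
  have hξ' : 0 ≤ ξ' := (div_nonneg four_pos.le hd.le).trans hξ'd.le
  exact gaugeHausdorff_eq_zero_of_subset (SXiTilde_subset_SXi hC.le hξ' hξ'ξ)
    (gaugeHausdorff_SXi_eq_zero hC hJ hξ' hd ((div_lt_iff₀ hd).1 hξ'd))

lemma gaugeHausdorff_SXi_ne_zero {C : ℝ} (hC : 0 < C) {J : ℕ → ℕ} (hJ : Function.Injective J)
    {ξ d : ℝ} (hξ : 1 ≤ ξ) (hd : 0 < d) (hdξ : d < 4 / ξ) :
    gaugeHausdorff d (SXi C J ξ) ≠ 0 := by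
  intro hzero
  have hξ0 : 0 < ξ := by linarith
  obtain ⟨ξ', hξξ', hξ'd⟩ := exists_between ((lt_div_comm₀ hd hξ0).1 hdξ)
  exact gaugeHausdorff_SXiTilde_ne_zero hC hJ (hξ.trans hξξ'.le) hd.le
    ((lt_div_comm₀ (hξ0.trans hξξ') hd).1 hξ'd)
    (gaugeHausdorff_eq_zero_of_subset (SXiTilde_subset_SXi hC.le hξ0.le hξξ') hzero)

theorem heisenberg_dimension_approximable_sets_general
    (C : ℝ) (hC : 0 < C) (J : ℕ → ℕ) (hJ : Function.Injective J) (ξ : ℝ) (hξ : 1 ≤ ξ) :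
    gaugeDimH (SXiTilde C J ξ) = 4 / ξ ∧ gaugeDimH (SXi C J ξ) = 4 / ξ := by
  have hξ0 : 0 < ξ := by linarith
  have hdim : 0 ≤ 4 / ξ := by positivity
  constructor
  · refine gaugeDimH_eq hdim (fun d hd => ?_) fun d hd hdξ =>
      gaugeHausdorff_SXiTilde_ne_zero hC hJ hξ hd.le hdξ
    exact gaugeHausdorff_SXiTilde_eq_zero hC hJ (hdim.trans_lt hd) ((div_lt_iff₀' hξ0).1 hd)
  · refine gaugeDimH_eq hdim (fun d hd => ?_) fun d hd hdξ =>
      gaugeHausdorff_SXi_ne_zero hC hJ hξ hd hdξ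
    exact gaugeHausdorff_SXi_eq_zero hC hJ hξ0.le (hdim.trans_lt hd) ((div_lt_iff₀' hξ0).1 hd)

/-- For every strictly increasing sequence of positive integers `𝒥` and every
`ξ ≥ 1`, the Hausdorff dimensions (w.r.t. the gauge distance) of `S_ξ(𝒥)` and `S̃_ξ(𝒥)` are
both `4/ξ`. -/
theorem heisenberg_dimension_approximable_sets
    (C : ℝ) (hC : 0 < C)
    (hcover : ∀ x : H3, ∀ j : ℕ, ∃ k : ℤ × ℤ × ℤ,
      Hdist x (xjk (j : ℤ) k) ≤ C * (2 : ℝ) ^ (-(j : ℤ)))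
    (J : ℕ → ℕ) (hJmono : StrictMono J) (hJpos : ∀ m, 1 ≤ J m)
    (ξ : ℝ) (hξ : 1 ≤ ξ) :
    gaugeDimH (SXiTilde C J ξ) = 4 / ξ ∧ gaugeDimH (SXi C J ξ) = 4 / ξ :=
  heisenberg_dimension_approximable_sets_general C hC J hJmono.injective ξ hξ
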